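/- Fix N > 0, Γ > 0, V ≥ 0 and r ∈ ℝ. Set C(Γ) = ½ log(1 + Γ/N), C'(Γ) = 1/(2(Γ+N)), and V(Γ) = (Γ² + 2ΓN)/(2(N+Γ)²). Let p₁, p₂, p₃ ≥ 0 with p₁+p₂+p₃ = 1 and π₁, π₂, π₃ ∈ ℝ satisfy Σⱼ pⱼπⱼ = r/√V(Γ) and Σⱼ pⱼπⱼ² − (r/√V(Γ))² ≤ C'(Γ)²·V / V(Γ). For each n, set Γⱼ⁽ⁿ⁾ = Γ − (√V(Γ)/(C'(Γ)√n))·πⱼ + r/(C'(Γ)√n) (positive for all sufficiently large n), and let Pₙ = Σⱼ pⱼ · Unif(S^{n−1}_{√(nΓⱼ⁽ⁿ⁾)}) be the mixture of the uniform distributions on the spheres of radii √(nΓⱼ⁽ⁿ⁾) in ℝⁿ. Let X ~ Pₙ, Z ~ N(0, N·Iₙ) independent, Y = X + Z, w(y|x) = (2πN)^{-n/2} exp(−‖y−x‖²/(2N)), and qₙ(y) = ∫ w(y|x) dPₙ(x). Then limsup_{n→∞} Pr( (1/n)·log( w(Y|X)/qₙ(Y) ) ≤ C(Γ) + r/√n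 ) ≤ Σⱼ pⱼ·Φ(πⱼ), where Φ is the standard normal CDF. -/

import Mathlib

open Real MeasureTheory ProbabilityTheory

/-- `UniformSphereFamily σ`: `σ n R` is, for every `n ≥ 1` and `R > 0`, the unique
rotation-invariant (uniform) Borel probability measure on the sphere of radius `R`
in `ℝⁿ`. -/
def UniformSphereFamily (σ : ∀ n : ℕ, ℝ → Measure (Fin n → ℝ)) : Prop :=
  ∀ (n : ℕ), 1 ≤ n → ∀ R : ℝ, 0 < R →
    IsProbabilityMeasure (σ n R) ∧
    σ n R ({x : Fin n → ℝ | ∑ i, (x i)^2 = R^2})ᶜ = 0 ∧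
    ∀ A : Matrix (Fin n) (Fin n) ℝ, A * A.transpose = 1 →
      (σ n R).map (A.mulVec) = σ n R

/-- The `n`-letter AWGN transition density `w(y|x)` with noise variance `N`. -/
noncomputable def w (N : ℝ) (n : ℕ) (y x : Fin n → ℝ) : ℝ :=
  (2 * π * N) ^ (-(n : ℝ)/2) * Real.exp (-(∑ i, (y i - x i)^2) / (2 * N))

/-- The standard normal CDF `Φ`. -/
noncomputable def Phi (r : ℝ) : ℝ := ((gaussianReal 0 1) (Set.Iic r)).toReal

/-- `Γⱼ⁽ⁿ⁾ = Γ − (√V(Γ)/(C'(Γ)√n))·πⱼ + r/(C'(Γ)√n)`. -/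
noncomputable def GammaJ (Γ VΓ Cp r πj : ℝ) (n : ℕ) : ℝ :=
  Γ - (Real.sqrt VΓ / (Cp * Real.sqrt n)) * πj + r / (Cp * Real.sqrt n)

/-- The mixture input distribution `Pₙ = Σⱼ pⱼ · Unif(S^{n−1}_{√(nΓⱼ⁽ⁿ⁾)})`. -/
noncomputable def Pmix (σ : ∀ n : ℕ, ℝ → Measure (Fin n → ℝ))
    (Γ VΓ Cp r : ℝ) (p πv : Fin 3 → ℝ) (n : ℕ) : Measure (Fin n → ℝ) :=
  ∑ j, ENNReal.ofReal (p j) • σ n (Real.sqrt (n * GammaJ Γ VΓ Cp r (πv j) n))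

/-! Given the input `x`, the log-likelihood ratio of `w(·|x)` against the Gaussian output law
`N(0, (N + Γ) Iₙ)` is affine in `x ⬝ᵥ z` and `z ⬝ᵥ z`, where `z` is the noise. On the sphere of
squared radius `nΓ + d√n` the rotation invariance of the noise replaces `x` by a constant vector, so
the ratio is a sum of `n` i.i.d. variables with mean `C(Γ)`, shifted by `d C'(Γ)√n`, up to an error
that is `o(√n)` in probability, and the central limit theorem gives the limit `Φ(πⱼ)` for the radius
`Γⱼ⁽ⁿ⁾`.

It remains to bound the true output density by `e^{ε√n}` times the Gaussian one. A Gaussian vector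
`g ~ N(0, Γ Iₙ)` lies with probability bounded below in the shell `nΓ + [d, d + δ]√n` of squared
radii, again by the central limit theorem, and `E exp⟨y, x⟩` for `x` uniform on a sphere increases
with the radius. So the output density of each sphere is at most a constant times `e^{O(δ√n)}` times
the output density of the Gaussian input, which is the density of `N(0, (N + Γ) Iₙ)`.
-/

open scoped ENNReal NNReal Matrix Topology
open Filter

attribute [local fun_prop] Continuous.dotProduct

section RotationInvariance

variable {ι : Type*} [Fintype ι]

lemma dotProduct_self_nonneg_real (u : ι → ℝ) : 0 ≤ u ⬝ᵥ u :=
  Finset.sum_nonneg fun i _ ↦ mul_self_nonneg (u i)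

/-- The law of a vector with independent centered Gaussian coordinates of variance `v`. -/
noncomputable abbrev isotropicGaussian (ι : Type*) [Fintype ι] (v : ℝ≥0) : Measure (ι → ℝ) :=
  Measure.pi fun _ : ι ↦ gaussianReal 0 v

lemma charFun_map_isotropicGaussian (v : ℝ≥0) (t : EuclideanSpace ℝ ι) :
    charFun ((isotropicGaussian ι v).map (WithLp.toLp 2)) t
      = Complex.exp (-(v * (t.ofLp ⬝ᵥ t.ofLp : ℝ) / 2)) := by
  simp only [charFun_pi, charFun_gaussianReal, ← Complex.exp_sum]
  simp [dotProduct, Finset.mul_sum, Finset.sum_div, sq]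

variable [DecidableEq ι]

lemma mulVec_dotProduct_mulVec_of_mem_orthogonalGroup {A : Matrix ι ι ℝ}
    (hA : A ∈ Matrix.orthogonalGroup ι ℝ) (u v : ι → ℝ) : (A *ᵥ u) ⬝ᵥ (A *ᵥ v) = u ⬝ᵥ v := by
  have hA' : Aᵀ * A = 1 := (Matrix.mem_orthogonalGroup_iff' ι ℝ).mp hA
  rw [Matrix.dotProduct_mulVec, ← Matrix.mulVec_transpose, Matrix.mulVec_mulVec, hA',
    Matrix.one_mulVec]

lemma exists_mem_orthogonalGroup_mulVec_eq {u v : ι → ℝ} (h : u ⬝ᵥ u = v ⬝ᵥ v) :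
    ∃ A ∈ Matrix.orthogonalGroup ι ℝ, A *ᵥ u = v := by
  have hnorm : ‖WithLp.toLp 2 u‖ = ‖WithLp.toLp 2 v‖ := by
    simpa [EuclideanSpace.norm_eq, dotProduct, sq] using congrArg Real.sqrt h
  let b := EuclideanSpace.basisFun ι ℝ
  let f := (ℝ ∙ (WithLp.toLp 2 u - WithLp.toLp 2 v))ᗮ.reflection
  refine ⟨_, f.toMatrix_mem_unitaryGroup b b, ?_⟩
  have hf : f (WithLp.toLp 2 u) = WithLp.toLp 2 v := Submodule.reflection_sub hnorm
  have repr_toLp (x : ι → ℝ) : ⇑(b.toBasis.repr (WithLp.toLp 2 x)) = x := by ext i; simp [b]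
  simpa only [repr_toLp, LinearEquiv.coe_coe, LinearIsometryEquiv.coe_toLinearEquiv, hf] using
    LinearMap.toMatrix_mulVec_repr b.toBasis b.toBasis f.toLinearMap (WithLp.toLp 2 u)

/-- Invariance of a measure on `ℝ^ι` under every orthogonal transformation. -/
def RotationInvariant (μ : Measure (ι → ℝ)) : Prop :=
  ∀ A ∈ Matrix.orthogonalGroup ι ℝ, μ.map A.mulVec = μ

lemma RotationInvariant.map_dotProduct_congr {μ : Measure (ι → ℝ)} (hμ : RotationInvariant μ)
    {u v : ι → ℝ} (h : u ⬝ᵥ u = v ⬝ᵥ v) :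
    μ.map (fun x ↦ (u ⬝ᵥ x, x ⬝ᵥ x)) = μ.map (fun x ↦ (v ⬝ᵥ x, x ⬝ᵥ x)) := by
  obtain ⟨A, hA, rfl⟩ := exists_mem_orthogonalGroup_mulVec_eq h
  conv_rhs => rw [← hμ A hA]
  rw [Measure.map_map (by fun_prop) (by fun_prop)]
  simp only [Function.comp_def, mulVec_dotProduct_mulVec_of_mem_orthogonalGroup hA]

lemma RotationInvariant.lintegral_dotProduct_congr {μ : Measure (ι → ℝ)}
    (hμ : RotationInvariant μ) {F : ℝ × ℝ → ℝ≥0∞} (hF : Measurable F)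
    {u v : ι → ℝ} (h : u ⬝ᵥ u = v ⬝ᵥ v) :
    ∫⁻ x, F (u ⬝ᵥ x, x ⬝ᵥ x) ∂μ = ∫⁻ x, F (v ⬝ᵥ x, x ⬝ᵥ x) ∂μ := by
  rw [← lintegral_map hF (g := fun x ↦ (u ⬝ᵥ x, x ⬝ᵥ x)) (by fun_prop),
    hμ.map_dotProduct_congr h, lintegral_map hF (by fun_prop)]

lemma RotationInvariant.monotoneOn_lintegral_exp {μ : Measure (ι → ℝ)}
    (hμ : RotationInvariant μ) (y : ι → ℝ) :
    MonotoneOn (fun l ↦ ∫⁻ x, ENNReal.ofReal (rexp (l * (y ⬝ᵥ x))) ∂μ) (Set.Ici 0) := by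
  have two_mul_eq_cosh (l : ℝ) : 2 * ∫⁻ x, ENNReal.ofReal (rexp (l * (y ⬝ᵥ x))) ∂μ
      = ∫⁻ x, ENNReal.ofReal (2 * cosh (l * (y ⬝ᵥ x))) ∂μ := by
    have hneg := hμ.lintegral_dotProduct_congr (F := fun p ↦ ENNReal.ofReal (rexp (l * p.1)))
      (by fun_prop) (u := y) (v := -y) (by simp)
    rw [two_mul]
    nth_rw 2 [hneg]
    rw [← lintegral_add_left (by fun_prop)]
    refine lintegral_congr fun x ↦ ?_
    rw [← ENNReal.ofReal_add (by positivity) (by positivity), Real.cosh_eq, neg_dotProduct,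
      mul_neg, mul_div_cancel₀ _ two_ne_zero]
  intro l (hl : 0 ≤ l) l' _ hll'
  rw [← ENNReal.mul_le_mul_iff_right two_ne_zero ENNReal.ofNat_ne_top, two_mul_eq_cosh,
    two_mul_eq_cosh]
  refine lintegral_mono fun x ↦ ENNReal.ofReal_le_ofReal ?_
  have : cosh (l * (y ⬝ᵥ x)) ≤ cosh (l' * (y ⬝ᵥ x)) := by
    rw [Real.cosh_le_cosh, abs_mul, abs_mul]
    gcongr
  gcongr

/-- The uniform probability measure on the sphere `{x | x ⬝ᵥ x = ρ}`, through its characteristic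
properties. The parameter is the *squared* radius. -/
structure IsSphereUniform (σ : Measure (ι → ℝ)) (ρ : ℝ) : Prop where
  isProbabilityMeasure : IsProbabilityMeasure σ
  ae_dotProduct_self : ∀ᵐ x ∂σ, x ⬝ᵥ x = ρ
  rotationInvariant : RotationInvariant σ

variable {γ σ : Measure (ι → ℝ)} {ρ : ℝ}

lemma IsSphereUniform.lintegral_eq_lintegral_lintegral [SFinite γ] (hσ : IsSphereUniform σ ρ)
    (hρ : 0 < ρ) (hγ : RotationInvariant γ) {F : ℝ × ℝ → ℝ≥0∞} (hF : Measurable F) (y : ι → ℝ) :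
    ∫⁻ g, F (y ⬝ᵥ g, g ⬝ᵥ g) ∂γ
      = ∫⁻ g, ∫⁻ x, F (√(g ⬝ᵥ g / ρ) * (y ⬝ᵥ x), g ⬝ᵥ g) ∂σ ∂γ := by
  have := hσ.isProbabilityMeasure
  have sq_sqrt_div (u : ι → ℝ) : √(u ⬝ᵥ u / ρ) * √(u ⬝ᵥ u / ρ) = u ⬝ᵥ u / ρ :=
    Real.mul_self_sqrt (div_nonneg (dotProduct_self_nonneg_real u) hρ.le)
  calc ∫⁻ g, F (y ⬝ᵥ g, g ⬝ᵥ g) ∂γ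
      = ∫⁻ _, ∫⁻ g, F (y ⬝ᵥ g, g ⬝ᵥ g) ∂γ ∂σ := by simp
    _ = ∫⁻ x, ∫⁻ g, F ((√(y ⬝ᵥ y / ρ) • x) ⬝ᵥ g, g ⬝ᵥ g) ∂γ ∂σ := by
        refine lintegral_congr_ae ?_
        filter_upwards [hσ.ae_dotProduct_self] with x hx
        refine hγ.lintegral_dotProduct_congr hF ?_
        rw [smul_dotProduct, dotProduct_smul, hx, smul_eq_mul, smul_eq_mul, ← mul_assoc,
          sq_sqrt_div, div_mul_cancel₀ _ hρ.ne']
    _ = ∫⁻ g, ∫⁻ x, F ((√(y ⬝ᵥ y / ρ) • x) ⬝ᵥ g, g ⬝ᵥ g) ∂σ ∂γ :=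
        lintegral_lintegral_swap (hF.comp (by fun_prop)).aemeasurable
    _ = ∫⁻ g, ∫⁻ x, F ((√(y ⬝ᵥ y / ρ) • g) ⬝ᵥ x, g ⬝ᵥ g) ∂σ ∂γ := by
        refine lintegral_congr fun g ↦ lintegral_congr fun x ↦ ?_
        rw [smul_dotProduct, smul_dotProduct, dotProduct_comm x g]
    _ = ∫⁻ g, ∫⁻ x, F ((√(g ⬝ᵥ g / ρ) • y) ⬝ᵥ x, g ⬝ᵥ g) ∂σ ∂γ := by
        refine lintegral_congr fun g ↦ hσ.rotationInvariant.lintegral_dotProduct_congr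
          (F := fun p ↦ F (p.1, g ⬝ᵥ g)) (by fun_prop) ?_
        simp only [smul_dotProduct, dotProduct_smul, smul_eq_mul, ← mul_assoc, sq_sqrt_div]
        ring
    _ = ∫⁻ g, ∫⁻ x, F (√(g ⬝ᵥ g / ρ) * (y ⬝ᵥ x), g ⬝ᵥ g) ∂σ ∂γ := by
        simp only [smul_dotProduct, smul_eq_mul]

lemma IsSphereUniform.measure_mul_lintegral_exp_le [SFinite γ] (hσ : IsSphereUniform σ ρ)
    (hρ : 0 < ρ) (hγ : RotationInvariant γ) {S : Set ℝ} (hS : MeasurableSet S)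
    (hSρ : S ⊆ Set.Ici ρ) (y : ι → ℝ) :
    γ {g | g ⬝ᵥ g ∈ S} * ∫⁻ x, ENNReal.ofReal (rexp (y ⬝ᵥ x)) ∂σ
      ≤ ∫⁻ g in {g | g ⬝ᵥ g ∈ S}, ENNReal.ofReal (rexp (y ⬝ᵥ g)) ∂γ := by
  have hm : MeasurableSet {g : ι → ℝ | g ⬝ᵥ g ∈ S} :=
    hS.preimage (f := fun g : ι → ℝ ↦ g ⬝ᵥ g) (by fun_prop)
  let F : ℝ × ℝ → ℝ≥0∞ := (Prod.snd ⁻¹' S).indicator fun p ↦ ENNReal.ofReal (rexp p.1)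
  have hF : Measurable F := Measurable.indicator (by fun_prop) (measurable_snd hS)
  rw [mul_comm, ← lintegral_indicator_const hm, ← lintegral_indicator hm]
  calc _ ≤ ∫⁻ g, ∫⁻ x, F (√(g ⬝ᵥ g / ρ) * (y ⬝ᵥ x), g ⬝ᵥ g) ∂σ ∂γ := by
        refine lintegral_mono (Set.indicator_le' (fun g hg ↦ ?_) fun _ _ ↦ zero_le)
        have hscale : 1 ≤ √(g ⬝ᵥ g / ρ) :=
          Real.one_le_sqrt.mpr <| (one_le_div hρ).mpr (hSρ hg)
        have hg' : g ⬝ᵥ g ∈ S := hg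
        simpa [F, Set.indicator, hg'] using hσ.rotationInvariant.monotoneOn_lintegral_exp y
          (Set.mem_Ici.mpr zero_le_one) (zero_le_one.trans hscale) hscale
    _ = ∫⁻ g, F (y ⬝ᵥ g, g ⬝ᵥ g) ∂γ := (hσ.lintegral_eq_lintegral_lintegral hρ hγ hF y).symm
    _ = _ := rfl

lemma rotationInvariant_isotropicGaussian (v : ℝ≥0) :
    RotationInvariant (isotropicGaussian ι v) := by
  intro A hA
  have hA' : Aᵀ ∈ Matrix.orthogonalGroup ι ℝ := Unitary.star_mem hA
  have := Measure.isProbabilityMeasure_map (μ := isotropicGaussian ι v) (f := A.mulVec)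
    (by fun_prop)
  refine charFun_eq_pi_iff.mp fun t ↦ ?_
  rw [← charFun_pi, charFun_map_isotropicGaussian,
    ← mulVec_dotProduct_mulVec_of_mem_orthogonalGroup hA',
    ← charFun_map_isotropicGaussian v (WithLp.toLp 2 (Aᵀ *ᵥ t.ofLp))]
  simp_rw [charFun_apply]
  rw [integral_map (by fun_prop) (by fun_prop), integral_map (by fun_prop) (by fun_prop),
    integral_map (by fun_prop) (by fun_prop)]
  simp [EuclideanSpace.inner_eq_star_dotProduct, Matrix.dotProduct_mulVec,
    Matrix.mulVec_transpose, dotProduct_comm]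

end RotationInvariance

lemma UniformSphereFamily.isSphereUniform {σ : ∀ n : ℕ, ℝ → Measure (Fin n → ℝ)}
    (hσ : UniformSphereFamily σ) {n : ℕ} (hn : 1 ≤ n) {ρ : ℝ} (hρ : 0 < ρ) :
    IsSphereUniform (σ n √ρ) ρ := by
  obtain ⟨hprob, hsphere, hrot⟩ := hσ n hn √ρ (Real.sqrt_pos.mpr hρ)
  refine ⟨hprob, ?_, fun A hA ↦ hrot A ((Matrix.mem_orthogonalGroup_iff _ _).mp hA)⟩
  filter_upwards [mem_ae_iff.mpr hsphere] with x (hx : ∑ i, x i ^ 2 = √ρ ^ 2)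
  simpa [dotProduct, sq, Real.mul_self_sqrt hρ.le] using hx

section GaussianChannel

lemma gaussianPDFReal_mul_gaussianPDFReal {N Γ : ℝ≥0} (hN : 0 < N) (hΓ : 0 < Γ) (x y : ℝ) :
    gaussianPDFReal 0 Γ x * gaussianPDFReal x N y
      = gaussianPDFReal 0 (N + Γ) y
        * gaussianPDFReal (Γ / (N + Γ) * y) (N * Γ / (N + Γ)) x := by
  have hnorm : √(2 * π * (N + Γ)) * √(2 * π * (N * Γ / (N + Γ))) = √(2 * π * Γ) * √(2 * π * N) := by
    rw [← Real.sqrt_mul (by positivity), ← Real.sqrt_mul (by positivity)]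
    congr 1
    field_simp
  have hexp : -(x - 0) ^ 2 / (2 * Γ) + -(y - x) ^ 2 / (2 * N) = -(y - 0) ^ 2 / (2 * (N + Γ))
      + -(x - Γ / (N + Γ) * y) ^ 2 / (2 * (N * Γ / (N + Γ) : ℝ)) := by
    field_simp
    ring
  simp only [gaussianPDFReal, NNReal.coe_add, NNReal.coe_div, NNReal.coe_mul]
  rw [mul_mul_mul_comm, ← mul_inv, ← Real.exp_add, mul_mul_mul_comm, ← mul_inv, ← Real.exp_add,
    hnorm, hexp]

lemma integral_gaussianPDFReal_gaussianReal {N Γ : ℝ≥0} (hN : 0 < N) (hΓ : 0 < Γ) (y : ℝ) :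
    ∫ x, gaussianPDFReal x N y ∂gaussianReal 0 Γ = gaussianPDFReal 0 (N + Γ) y := by
  simp_rw [integral_gaussianReal_eq_integral_smul hΓ.ne', smul_eq_mul,
    gaussianPDFReal_mul_gaussianPDFReal hN hΓ]
  rw [integral_const_mul, integral_gaussianPDFReal_eq_one _ (by positivity), mul_one]

variable {N : ℝ≥0} {n : ℕ}

lemma w_eq_prod_gaussianPDFReal (N : ℝ≥0) (y x : Fin n → ℝ) :
    w N n y x = ∏ i, gaussianPDFReal (x i) N (y i) := by
  have hnorm : (2 * π * N : ℝ) ^ (-(n : ℝ) / 2) = (√(2 * π * N))⁻¹ ^ n := by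
    rw [← Real.rpow_natCast, Real.sqrt_eq_rpow, ← Real.rpow_neg (by positivity),
      ← Real.rpow_mul (by positivity)]
    congr 1
    ring
  rw [w, hnorm]
  simp only [gaussianPDFReal, Finset.prod_mul_distrib, ← Real.exp_sum, Finset.prod_const,
    Finset.card_univ, Fintype.card_fin, ← Finset.sum_div, Finset.sum_neg_distrib]

lemma integral_w_isotropicGaussian {Γ : ℝ≥0} (hN : 0 < N) (hΓ : 0 < Γ) (y : Fin n → ℝ) :
    ∫ x, w N n y x ∂isotropicGaussian (Fin n) Γ = w (N + Γ) n y 0 := by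
  rw [← NNReal.coe_add]
  simp only [w_eq_prod_gaussianPDFReal]
  rw [integral_fintype_prod_eq_prod fun i x ↦ gaussianPDFReal x N (y i)]
  simp only [integral_gaussianPDFReal_gaussianReal hN hΓ, Pi.zero_apply]

lemma w_pos (hN : 0 < N) (y x : Fin n → ℝ) : 0 < w N n y x := by
  unfold w
  positivity

@[fun_prop]
lemma continuous_w (N : ℝ) (y : Fin n → ℝ) : Continuous (w N n y) := by
  unfold w
  fun_prop

lemma w_le (N : ℝ≥0) (y x : Fin n → ℝ) : w N n y x ≤ (2 * π * N) ^ (-(n : ℝ) / 2) := by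
  refine mul_le_of_le_one_right (by positivity) (Real.exp_le_one_iff.mpr ?_)
  exact div_nonpos_of_nonpos_of_nonneg (neg_nonpos.mpr (by positivity)) (by positivity)

lemma integrable_w (hN : 0 < N) (y : Fin n → ℝ) (P : Measure (Fin n → ℝ)) [IsFiniteMeasure P] :
    Integrable (w N n y) P :=
  .of_bound (by fun_prop) _ <| .of_forall fun x ↦ by
    rw [Real.norm_of_nonneg (w_pos hN y x).le]
    exact w_le N y x

lemma integral_w_pos (hN : 0 < N) (y : Fin n → ℝ) (P : Measure (Fin n → ℝ)) [IsFiniteMeasure P]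
    [NeZero P] : 0 < ∫ x, w N n y x ∂P := by
  rw [integral_pos_iff_support_of_nonneg (fun x ↦ (w_pos hN y x).le) (integrable_w hN y P),
    Set.eq_univ_of_forall fun x ↦ Function.mem_support.mpr (w_pos hN y x).ne']
  exact NeZero.pos (P Set.univ)

lemma w_eq_mul_exp (N : ℝ) (y x : Fin n → ℝ) :
    w N n y x = w N n y 0 * rexp (-(x ⬝ᵥ x) / (2 * N)) * rexp ((N⁻¹ • y) ⬝ᵥ x) := by
  have hsq : -∑ i, (y i - x i) ^ 2
      = -∑ i, (y i - (0 : Fin n → ℝ) i) ^ 2 + -(x ⬝ᵥ x) + 2 * (y ⬝ᵥ x) := by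
    simp only [dotProduct, Finset.mul_sum, ← Finset.sum_neg_distrib, ← Finset.sum_add_distrib]
    refine Finset.sum_congr rfl fun i _ ↦ ?_
    rw [Pi.zero_apply]
    ring
  rw [w, w, hsq, smul_dotProduct, smul_eq_mul, add_div, add_div,
    mul_div_mul_left _ _ two_ne_zero, div_eq_inv_mul (y ⬝ᵥ x), Real.exp_add, Real.exp_add]
  ring

lemma mul_exp_le_mul_w {ρ δ : ℝ} (N : ℝ≥0) (y : Fin n → ℝ) {x : Fin n → ℝ}
    (hx : x ⬝ᵥ x ≤ ρ + δ) :
    w N n y 0 * rexp (-ρ / (2 * N)) * rexp (((N : ℝ)⁻¹ • y) ⬝ᵥ x)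
      ≤ rexp (δ / (2 * N)) * w N n y x := by
  have hexp : rexp (-ρ / (2 * N)) ≤ rexp (δ / (2 * N)) * rexp (-(x ⬝ᵥ x) / (2 * N)) := by
    rw [← Real.exp_add, ← add_div]
    gcongr
    linarith
  have hw : 0 ≤ w N n y 0 := by unfold w; positivity
  calc w N n y 0 * rexp (-ρ / (2 * N)) * rexp (((N : ℝ)⁻¹ • y) ⬝ᵥ x)
      ≤ w N n y 0 * (rexp (δ / (2 * N)) * rexp (-(x ⬝ᵥ x) / (2 * N)))
          * rexp (((N : ℝ)⁻¹ • y) ⬝ᵥ x) := by gcongr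
    _ = rexp (δ / (2 * N)) * w N n y x := by rw [w_eq_mul_exp N y x]; ring

variable {σ γ : Measure (Fin n → ℝ)} {ρ : ℝ}

lemma IsSphereUniform.lintegral_w (hσ : IsSphereUniform σ ρ) (N : ℝ≥0) (y : Fin n → ℝ) :
    ∫⁻ x, ENNReal.ofReal (w N n y x) ∂σ
      = ENNReal.ofReal (w N n y 0 * rexp (-ρ / (2 * N)))
        * ∫⁻ x, ENNReal.ofReal (rexp (((N : ℝ)⁻¹ • y) ⬝ᵥ x)) ∂σ := by
  rw [← lintegral_const_mul _ (by fun_prop)]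
  refine lintegral_congr_ae ?_
  filter_upwards [hσ.ae_dotProduct_self] with x hx
  rw [w_eq_mul_exp, hx, ENNReal.ofReal_mul (by unfold w; positivity)]

lemma IsSphereUniform.measure_mul_lintegral_w_le [SFinite γ] (hσ : IsSphereUniform σ ρ)
    (hρ : 0 < ρ) (hγ : RotationInvariant γ) (N : ℝ≥0) (δ : ℝ) (y : Fin n → ℝ) :
    γ {g | g ⬝ᵥ g ∈ Set.Icc ρ (ρ + δ)} * ∫⁻ x, ENNReal.ofReal (w N n y x) ∂σ
      ≤ ENNReal.ofReal (rexp (δ / (2 * N))) * ∫⁻ g, ENNReal.ofReal (w N n y g) ∂γ := by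
  set A : Set (Fin n → ℝ) := {g | g ⬝ᵥ g ∈ Set.Icc ρ (ρ + δ)}
  set c : ℝ := w N n y 0 * rexp (-ρ / (2 * N))
  have hA : MeasurableSet A :=
    measurableSet_Icc.preimage (f := fun g : Fin n → ℝ ↦ g ⬝ᵥ g) (by fun_prop)
  rw [hσ.lintegral_w, mul_left_comm]
  calc ENNReal.ofReal c * (γ A * ∫⁻ x, ENNReal.ofReal (rexp (((N : ℝ)⁻¹ • y) ⬝ᵥ x)) ∂σ)
      ≤ ENNReal.ofReal c * ∫⁻ g in A, ENNReal.ofReal (rexp (((N : ℝ)⁻¹ • y) ⬝ᵥ g)) ∂γ := by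
        gcongr
        exact hσ.measure_mul_lintegral_exp_le hρ hγ measurableSet_Icc Set.Icc_subset_Ici_self _
    _ = ∫⁻ g in A, ENNReal.ofReal c * ENNReal.ofReal (rexp (((N : ℝ)⁻¹ • y) ⬝ᵥ g)) ∂γ :=
        (lintegral_const_mul _ (by fun_prop)).symm
    _ ≤ ∫⁻ g in A, ENNReal.ofReal (rexp (δ / (2 * N))) * ENNReal.ofReal (w N n y g) ∂γ := by
        refine setLIntegral_mono' hA fun g hg ↦ ?_
        rw [← ENNReal.ofReal_mul' (Real.exp_nonneg _), ← ENNReal.ofReal_mul (Real.exp_nonneg _)]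
        exact ENNReal.ofReal_le_ofReal (mul_exp_le_mul_w N y hg.2)
    _ ≤ ∫⁻ g, ENNReal.ofReal (rexp (δ / (2 * N))) * ENNReal.ofReal (w N n y g) ∂γ :=
        setLIntegral_le_lintegral _ _
    _ = ENNReal.ofReal (rexp (δ / (2 * N))) * ∫⁻ g, ENNReal.ofReal (w N n y g) ∂γ :=
        lintegral_const_mul _ (by fun_prop)

lemma IsSphereUniform.integral_w_le {Γ : ℝ≥0} (hσ : IsSphereUniform σ ρ) (hρ : 0 < ρ)
    (hN : 0 < N) (hΓ : 0 < Γ) (δ : ℝ) (y : Fin n → ℝ) :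
    (isotropicGaussian (Fin n) Γ).real {g | g ⬝ᵥ g ∈ Set.Icc ρ (ρ + δ)} * ∫ x, w N n y x ∂σ
      ≤ rexp (δ / (2 * N)) * w (N + Γ) n y 0 := by
  have := hσ.isProbabilityMeasure
  have h := hσ.measure_mul_lintegral_w_le hρ (rotationInvariant_isotropicGaussian Γ) N δ y
  simp only [← ofReal_integral_eq_lintegral_ofReal (integrable_w hN y _)
    (.of_forall fun x ↦ (w_pos hN y x).le), integral_w_isotropicGaussian hN hΓ] at h
  rwa [← ofReal_measureReal, ← ENNReal.ofReal_mul (by positivity),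
    ← ENNReal.ofReal_mul (by positivity), ENNReal.ofReal_le_ofReal_iff] at h
  have := w_pos (N := N + Γ) (by positivity) y 0
  positivity

end GaussianChannel

section CentralLimit

lemma tendsto_pi_inv_sqrt_mul_sum_sub {α : Type*} [MeasurableSpace α] (ν : Measure α)
    [IsProbabilityMeasure ν] {g : α → ℝ} (hg : Measurable g) (hg2 : MemLp g 2 ν) {E : Set ℝ}
    (hE : MeasurableSet E) (hfr : gaussianReal 0 Var[g; ν].toNNReal (frontier E) = 0) :
    Tendsto (fun n : ℕ ↦ Measure.pi (fun _ : Fin n ↦ ν)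
        {z | (√n)⁻¹ * (∑ i, g (z i) - n * ∫ a, g a ∂ν) ∈ E})
      atTop (𝓝 (gaussianReal 0 Var[g; ν].toNNReal E)) := by
  let P := Measure.infinitePi fun _ : ℕ ↦ ν
  have eval_preserving (i : ℕ) : MeasurePreserving (fun x : ℕ → α ↦ x i) P ν :=
    measurePreserving_eval_infinitePi (fun _ : ℕ ↦ ν) i
  have hasLaw_eval (i : ℕ) : HasLaw (fun x : ℕ → α ↦ x i) ν P :=
    ⟨(eval_preserving i).aemeasurable, (eval_preserving i).map_eq⟩
  have hvar : Var[fun x ↦ g (x 0); P] = Var[g; ν] :=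
    (eval_preserving 0).variance_fun_comp hg.aemeasurable
  have hmean : ∫ x, g (x 0) ∂P = ∫ a, g a ∂ν :=
    (hasLaw_eval 0).integral_comp hg.aestronglyMeasurable
  have clt := tendstoInDistribution_inv_sqrt_mul_sum_sub (P := P)
    (P' := gaussianReal 0 Var[g; ν].toNNReal) (X := fun i x ↦ g (x i)) (Y := id)
    (by rw [hvar]; exact HasLaw.id) (hg2.comp_measurePreserving (eval_preserving 0))
    (iIndepFun_infinitePi fun _ ↦ hg)
    fun i ↦ ((hasLaw_eval i).identDistrib (hasLaw_eval 0)).comp hg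
  have hlim := ProbabilityMeasure.tendsto_measure_of_null_frontier_of_tendsto' clt.tendsto
    (E := E) (by simpa using hfr)
  simp only [ProbabilityMeasure.coe_mk, Measure.map_id, hmean] at hlim
  refine hlim.congr fun n ↦ ?_
  have hpi : Measure.pi (fun _ : Fin n ↦ ν) = P.map fun x (i : Fin n) ↦ x i := by
    rw [Measure.map_infinitePi_infinitePi_of_inj (P := fun _ : ℕ ↦ ν) Fin.val_injective,
      Measure.infinitePi_eq_pi]
  rw [hpi, Measure.map_apply (by fun_prop) hE, Measure.map_apply (by fun_prop)]
  · simp only [Set.preimage, Finset.sum_range, Set.mem_ofPred_eq]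
  · exact measurableSet_preimage (by fun_prop) hE

end CentralLimit

section GaussianMoments

variable (v : ℝ≥0)

lemma integrable_pow_gaussianReal (n : ℕ) : Integrable (fun x ↦ x ^ n) (gaussianReal 0 v) :=
  (integrable_norm_iff (by fun_prop)).mp <| by
    simpa using (memLp_id_gaussianReal (μ := 0) (v := v) n).integrable_norm_pow'

lemma hasDerivAt_gaussianPDFReal (m x : ℝ) :
    HasDerivAt (gaussianPDFReal m v) (-(x - m) / v * gaussianPDFReal m v x) x := by
  have h : HasDerivAt (fun x ↦ -(x - m) ^ 2 / (2 * v)) (-(x - m) / v) x := by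
    refine ((((hasDerivAt_id x).sub_const m).pow 2).neg.div_const (2 * v : ℝ)).congr_deriv ?_
    simp only [id, Nat.cast_ofNat, Nat.add_one_sub_one, pow_one, mul_one, ← mul_neg]
    exact mul_div_mul_left _ _ two_ne_zero
  refine (h.exp.const_mul (√(2 * π * v))⁻¹).congr_deriv ?_
  rw [gaussianPDFReal]
  ring

lemma integral_pow_add_two_gaussianReal (n : ℕ) :
    ∫ x, x ^ (n + 2) ∂gaussianReal 0 v = (n + 1) * v * ∫ x, x ^ n ∂gaussianReal 0 v := by
  obtain rfl | hv := eq_or_ne v 0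
  · simp
  have integrable_pow_mul (k : ℕ) : Integrable fun x ↦ gaussianPDFReal 0 v x * x ^ k := by
    have := integrable_pow_gaussianReal v k
    rw [gaussianReal_of_var_ne_zero _ hv, integrable_withDensity_iff_integrable_smul'
      (by fun_prop) (by simp [gaussianPDF])] at this
    simpa only [toReal_gaussianPDF, smul_eq_mul] using this
  have hderiv (x : ℝ) : HasDerivAt (fun x ↦ gaussianPDFReal 0 v x * x ^ (n + 1))
      ((n + 1) * (gaussianPDFReal 0 v x * x ^ n)
        - (v : ℝ)⁻¹ * (gaussianPDFReal 0 v x * x ^ (n + 2))) x := by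
    refine ((hasDerivAt_gaussianPDFReal v 0 x).mul (hasDerivAt_pow (n + 1) x)).congr_deriv ?_
    push_cast
    ring
  have hzero := integral_eq_zero_of_hasDerivAt_of_integrable hderiv
    (((integrable_pow_mul n).const_mul _).sub ((integrable_pow_mul (n + 2)).const_mul _))
    (integrable_pow_mul (n + 1))
  rw [integral_sub ((integrable_pow_mul n).const_mul _) ((integrable_pow_mul (n + 2)).const_mul _),
    integral_const_mul, integral_const_mul] at hzero
  simp only [integral_gaussianReal_eq_integral_smul hv, smul_eq_mul]
  field_simp at hzero
  linarith

variable (a b : ℝ)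

lemma integral_linear_add_sq_gaussianReal :
    ∫ x, (a * x + b * x ^ 2) ∂gaussianReal 0 v = b * v := by
  rw [integral_add (by simpa using (integrable_pow_gaussianReal v 1).const_mul a)
    ((integrable_pow_gaussianReal v 2).const_mul b), integral_const_mul, integral_const_mul,
    integral_pow_add_two_gaussianReal v 0]
  simp

lemma memLp_linear_add_sq_gaussianReal :
    MemLp (fun x ↦ a * x + b * x ^ 2) 2 (gaussianReal 0 v) := by
  have hsq : MemLp (fun x : ℝ ↦ x ^ 2) 2 (gaussianReal 0 v) := by
    rw [memLp_two_iff_integrable_sq (by fun_prop)]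
    simpa only [← pow_mul] using integrable_pow_gaussianReal v (2 * 2)
  exact ((memLp_id_gaussianReal 2).const_mul a).add (hsq.const_mul b)

lemma variance_linear_add_sq_gaussianReal :
    Var[fun x ↦ a * x + b * x ^ 2; gaussianReal 0 v] = a ^ 2 * v + 2 * b ^ 2 * v ^ 2 := by
  have hexpand (x : ℝ) : (a * x + b * x ^ 2) ^ 2
      = a ^ 2 * x ^ 2 + (2 * a * b * x ^ 3 + b ^ 2 * x ^ 4) := by ring
  have h2 := (integrable_pow_gaussianReal v 2).const_mul (a ^ 2)
  have h3 := (integrable_pow_gaussianReal v 3).const_mul (2 * a * b)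
  have h4 := (integrable_pow_gaussianReal v 4).const_mul (b ^ 2)
  rw [variance_eq_sub (memLp_linear_add_sq_gaussianReal v a b),
    integral_linear_add_sq_gaussianReal]
  simp only [Pi.pow_apply, hexpand]
  rw [integral_add h2 (h3.fun_add h4), integral_add h3 h4, integral_const_mul, integral_const_mul,
    integral_const_mul, integral_pow_add_two_gaussianReal v 2,
    integral_pow_add_two_gaussianReal v 1, integral_pow_add_two_gaussianReal v 0]
  simp only [Nat.cast_ofNat, CharP.cast_eq_zero, pow_zero, pow_one, integral_const,
    probReal_univ, smul_eq_mul, integral_id_gaussianReal]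
  ring

end GaussianMoments

section Annulus

lemma tendsto_isotropicGaussian_linear_add_sq {v s : ℝ≥0} {a b : ℝ}
    (hs : (s : ℝ) = a ^ 2 * v + 2 * b ^ 2 * v ^ 2) {E : Set ℝ} (hE : MeasurableSet E)
    (hfr : gaussianReal 0 s (frontier E) = 0) :
    Tendsto (fun n : ℕ ↦ isotropicGaussian (Fin n) v
        {z | (√n)⁻¹ * (a * ∑ i, z i + b * (z ⬝ᵥ z) - n * (b * v)) ∈ E})
      atTop (𝓝 (gaussianReal 0 s E)) := by
  have hvar : Var[fun x ↦ a * x + b * x ^ 2; gaussianReal 0 v].toNNReal = s := by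
    rw [variance_linear_add_sq_gaussianReal, ← hs, Real.toNNReal_coe]
  have clt := tendsto_pi_inv_sqrt_mul_sum_sub (gaussianReal 0 v) (by fun_prop)
    (memLp_linear_add_sq_gaussianReal v a b) hE (by rwa [hvar])
  simp only [hvar, integral_linear_add_sq_gaussianReal, Finset.sum_add_distrib,
    ← Finset.mul_sum] at clt
  simpa only [dotProduct, ← sq] using clt

lemma tendsto_isotropicGaussian_dotProduct_self_mem_Icc {v : ℝ≥0} (hv : 0 < v) {a b : ℝ}
    (hab : a ≤ b) :
    Tendsto (fun n : ℕ ↦ isotropicGaussian (Fin n) v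
        {g | g ⬝ᵥ g ∈ Set.Icc (n * v + a * √n) (n * v + b * √n)})
      atTop (𝓝 (gaussianReal 0 (2 * v ^ 2) (Set.Icc a b))) := by
  have := nullSingletonClass_gaussianReal (μ := 0) (v := 2 * v ^ 2) (by positivity)
  refine (tendsto_isotropicGaussian_linear_add_sq (v := v) (a := 0) (b := 1) (by simp)
    measurableSet_Icc (by rw [frontier_Icc hab]; exact (Set.toFinite _).measure_zero _)).congr' ?_
  filter_upwards [eventually_gt_atTop 0] with n hn
  have hsqrt : 0 < √(n : ℝ) := by positivity
  congr! 3 with g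
  rw [Set.mem_Icc, Set.mem_Icc, ← div_eq_inv_mul, le_div_iff₀ hsqrt, div_le_iff₀ hsqrt]
  constructor <;> rintro ⟨h, h'⟩ <;> constructor <;> linarith

lemma gaussianReal_Icc_pos {v : ℝ≥0} (hv : v ≠ 0) (m : ℝ) {a b : ℝ} (hab : a < b) :
    0 < gaussianReal m v (Set.Icc a b) :=
  pos_iff_ne_zero.mpr fun h ↦ by
    simpa [hab.not_ge] using gaussianReal_absolutelyContinuous' m hv h

lemma tendsto_const_mul_sqrt_natCast_atTop {c : ℝ} (hc : 0 < c) :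
    Tendsto (fun n : ℕ ↦ c * √(n : ℝ)) atTop atTop :=
  (Real.tendsto_sqrt_atTop.comp tendsto_natCast_atTop_atTop).const_mul_atTop hc

lemma eventually_natCast_mul_add_mul_sqrt_pos {a : ℝ} (ha : 0 < a) (d : ℝ) :
    ∀ᶠ n : ℕ in atTop, 0 < n * a + d * √n := by
  filter_upwards [(tendsto_const_mul_sqrt_natCast_atTop ha).eventually_gt_atTop (-d),
    eventually_gt_atTop 0] with n hd hn
  have hsqrt : 0 < √(n : ℝ) := by positivity
  calc 0 < √n * (a * √n + d) := mul_pos hsqrt (by linarith)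
    _ = n * a + d * √n := by
      linear_combination a * Real.mul_self_sqrt (Nat.cast_nonneg (α := ℝ) n)

lemma eventually_forall_integral_w_le {N Γ : ℝ≥0} (hN : 0 < N) (hΓ : 0 < Γ) (d : ℝ) {ε : ℝ}
    (hε : 0 < ε) :
    ∀ᶠ n : ℕ in atTop, ∀ σ : Measure (Fin n → ℝ), IsSphereUniform σ (n * Γ + d * √n) →
      ∀ y, ∫ x, w N n y x ∂σ ≤ rexp (ε * √n) * w (N + Γ) n y 0 := by
  have hN' : (0 : ℝ) < N := hN
  have hlt : d < d + ε * N := by linarith [mul_pos hε hN']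
  have hannulus := (ENNReal.tendsto_toReal (measure_ne_top _ _)).comp
    (tendsto_isotropicGaussian_dotProduct_self_mem_Icc hΓ hlt.le)
  have hexp : Tendsto (fun n : ℕ ↦ rexp (-(ε / 2 * √n))) atTop (𝓝 0) :=
    Real.tendsto_exp_neg_atTop_nhds_zero.comp (tendsto_const_mul_sqrt_natCast_atTop (half_pos hε))
  have hpos := ENNReal.toReal_pos
    (gaussianReal_Icc_pos (v := 2 * Γ ^ 2) (by positivity) 0 hlt).ne' (measure_ne_top _ _)
  filter_upwards [hexp.eventually_lt hannulus hpos,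
    eventually_natCast_mul_add_mul_sqrt_pos (NNReal.coe_pos.mpr hΓ) d] with n hn hρ σ hσ y
  have := hσ.isProbabilityMeasure
  have hq : 0 < ∫ x, w N n y x ∂σ := integral_w_pos hN y σ
  have hdom := hσ.integral_w_le hρ hN hΓ (ε * N * √n) y
  rw [add_assoc, ← add_mul] at hdom
  have hδ : ε * N * √n / (2 * N) = ε / 2 * √n := by field_simp
  rw [hδ] at hdom
  calc ∫ x, w N n y x ∂σ
      = rexp (ε / 2 * √n) * (rexp (-(ε / 2 * √n)) * ∫ x, w N n y x ∂σ) := by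
        rw [← mul_assoc, ← Real.exp_add, add_neg_cancel, Real.exp_zero, one_mul]
    _ ≤ rexp (ε / 2 * √n) * (rexp (ε / 2 * √n) * w (N + Γ) n y 0) := by
        refine mul_le_mul_of_nonneg_left ?_ (Real.exp_nonneg _)
        exact (mul_le_mul_of_nonneg_right hn.le hq.le).trans hdom
    _ = rexp (ε * √n) * w (N + Γ) n y 0 := by
        rw [← mul_assoc, ← Real.exp_add, ← add_mul, add_halves]

end Annulus

section LinearQuadraticTail

lemma isotropicGaussian_le_abs_dotProduct_le {ι : Type*} [Fintype ι] (v : ℝ≥0) (u : ι → ℝ)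
    {τ : ℝ} (hτ : 0 < τ) :
    isotropicGaussian ι v {z | τ ≤ |u ⬝ᵥ z|} ≤ ENNReal.ofReal (v * (u ⬝ᵥ u) / τ ^ 2) := by
  have hmem (i : ι) : MemLp (fun x ↦ u i * x) 2 (gaussianReal 0 v) :=
    (memLp_id_gaussianReal 2).const_mul (u i)
  have hmem_eval (i : ι) : MemLp (fun z : ι → ℝ ↦ u i * z i) 2 (isotropicGaussian ι v) :=
    (hmem i).comp_measurePreserving (measurePreserving_eval _ i)
  have hsum : (∑ i, fun z : ι → ℝ ↦ u i * z i) = fun z ↦ u ⬝ᵥ z := by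
    ext z
    simp [dotProduct]
  have hvar : Var[fun z ↦ u ⬝ᵥ z; isotropicGaussian ι v] = v * (u ⬝ᵥ u) := by
    rw [← hsum, variance_sum_pi hmem]
    rw [dotProduct, Finset.mul_sum]
    refine Finset.sum_congr rfl fun i _ ↦ ?_
    rw [variance_const_mul (u i) fun x ↦ x, variance_fun_id_gaussianReal]
    ring
  have hmean : ∫ z, u ⬝ᵥ z ∂isotropicGaussian ι v = 0 := by
    simp only [dotProduct]
    rw [integral_finsetSum _ fun i _ ↦ (hmem_eval i).integrable one_le_two]
    simp [integral_const_mul, integral_eval]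
  have hmem_sum : MemLp (fun z ↦ u ⬝ᵥ z) 2 (isotropicGaussian ι v) :=
    hsum ▸ memLp_finsetSum' _ fun i _ ↦ hmem_eval i
  simpa only [hvar, hmean, sub_zero] using meas_ge_le_variance_div_sq hmem_sum hτ

lemma sq_sqrt_sub_sqrt_le {a b : ℝ} (ha : 0 ≤ a) (hb : 0 < b) :
    (√a - √b) ^ 2 ≤ (a - b) ^ 2 / b := by
  rw [le_div_iff₀ hb]
  calc (√a - √b) ^ 2 * b = (√a - √b) ^ 2 * √b ^ 2 := by rw [Real.sq_sqrt hb.le]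
    _ ≤ (√a - √b) ^ 2 * (√a + √b) ^ 2 := by
        gcongr
        exact le_add_of_nonneg_left (Real.sqrt_nonneg a)
    _ = (a - b) ^ 2 := by
        rw [← mul_pow, mul_comm, ← sq_sub_sq, Real.sq_sqrt ha, Real.sq_sqrt hb.le]

lemma sq_mul_sqrt_div_sub_mul_sqrt_le {n : ℕ} (hn : 0 < n) {Γ d : ℝ} (hΓ : 0 < Γ)
    (hd : 0 ≤ n * Γ + d * √n) (a : ℝ) :
    (a * √((n * Γ + d * √n) / n) - a * √Γ) ^ 2 ≤ a ^ 2 * d ^ 2 / Γ / n := by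
  have hsub : (n * Γ + d * √n) / n - Γ = d / √n := by
    field_simp
    linear_combination d * Real.mul_self_sqrt n.cast_nonneg
  have hsqrt := sq_sqrt_sub_sqrt_le (div_nonneg hd n.cast_nonneg) hΓ
  rw [hsub, div_pow, Real.sq_sqrt n.cast_nonneg] at hsqrt
  calc (a * √((n * Γ + d * √n) / n) - a * √Γ) ^ 2
      = a ^ 2 * (√((n * Γ + d * √n) / n) - √Γ) ^ 2 := by ring
    _ ≤ a ^ 2 * (d ^ 2 / n / Γ) := by gcongr
    _ = a ^ 2 * d ^ 2 / Γ / n := by ring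

lemma RotationInvariant.measure_dotProduct_congr {ι : Type*} [Fintype ι] [DecidableEq ι]
    {μ : Measure (ι → ℝ)} (hμ : RotationInvariant μ) {D : Set (ℝ × ℝ)} (hD : MeasurableSet D)
    {u v : ι → ℝ} (h : u ⬝ᵥ u = v ⬝ᵥ v) :
    μ {x | (u ⬝ᵥ x, x ⬝ᵥ x) ∈ D} = μ {x | (v ⬝ᵥ x, x ⬝ᵥ x) ∈ D} := by
  have map_apply (y : ι → ℝ) : μ.map (fun x ↦ (y ⬝ᵥ x, x ⬝ᵥ x)) D = μ {x | (y ⬝ᵥ x, x ⬝ᵥ x) ∈ D} :=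
    Measure.map_apply (by fun_prop) hD
  rw [← map_apply, hμ.map_dotProduct_congr h, map_apply]

lemma RotationInvariant.measure_dotProduct_eq_measure_sum {n : ℕ} (hn : 0 < n)
    {μ : Measure (Fin n → ℝ)} (hμ : RotationInvariant μ) {D : Set (ℝ × ℝ)} (hD : MeasurableSet D)
    (x : Fin n → ℝ) :
    μ {z | (x ⬝ᵥ z, z ⬝ᵥ z) ∈ D} = μ {z | (√(x ⬝ᵥ x / n) * ∑ i, z i, z ⬝ᵥ z) ∈ D} := by
  have hmul_self : √(x ⬝ᵥ x / n) * √(x ⬝ᵥ x / n) = x ⬝ᵥ x / n :=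
    Real.mul_self_sqrt (div_nonneg (dotProduct_self_nonneg_real x) n.cast_nonneg)
  have hn' : (n : ℝ) ≠ 0 := by positivity
  rw [hμ.measure_dotProduct_congr hD (v := fun _ ↦ √(x ⬝ᵥ x / n))]
  · simp only [dotProduct, Finset.mul_sum]
  · simp only [dotProduct.eq_1 fun _ ↦ √(x ⬝ᵥ x / n), hmul_self, Finset.sum_const,
      Finset.card_univ, Fintype.card_fin, nsmul_eq_mul]
    exact (mul_div_cancel₀ _ hn').symm

-- By rotation invariance `x` may be replaced by a constant vector; the second summand bounds the
-- effect of then replacing the coefficient of `∑ i, z i` by `α`.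
lemma isotropicGaussian_linear_add_sq_le {n : ℕ} (hn : 0 < n) (v : ℝ≥0) (a b α : ℝ) {t' t : ℝ}
    (ht : t' < t) (x : Fin n → ℝ) :
    isotropicGaussian (Fin n) v {z | a * (x ⬝ᵥ z) + b * (z ⬝ᵥ z) - n * (b * v) ≤ t' * √n}
      ≤ isotropicGaussian (Fin n) v
          {z | (√n)⁻¹ * (α * ∑ i, z i + b * (z ⬝ᵥ z) - n * (b * v)) ∈ Set.Iic t}
        + ENNReal.ofReal (v * (a * √(x ⬝ᵥ x / n) - α) ^ 2 / (t - t') ^ 2) := by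
  have hsqrt : 0 < √(n : ℝ) := by positivity
  set c : ℝ := √(x ⬝ᵥ x / n)
  let u : Fin n → ℝ := fun _ ↦ a * c - α
  have hcheb : isotropicGaussian (Fin n) v {z | (t - t') * √n ≤ |u ⬝ᵥ z|}
      ≤ ENNReal.ofReal (v * (a * c - α) ^ 2 / (t - t') ^ 2) := by
    have hpos : 0 < (t - t') * √n := mul_pos (sub_pos.mpr ht) hsqrt
    convert isotropicGaussian_le_abs_dotProduct_le v u hpos using 2
    simp only [u, dotProduct, Finset.sum_const, Finset.card_univ, Fintype.card_fin, nsmul_eq_mul,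
      mul_pow, Real.sq_sqrt n.cast_nonneg]
    field_simp
  have hrot := (rotationInvariant_isotropicGaussian v).measure_dotProduct_eq_measure_sum hn
    (D := {q | a * q.1 + b * q.2 - n * (b * v) ≤ t' * √n})
    (measurableSet_le (by fun_prop) (by fun_prop)) x
  refine (hrot.le.trans (measure_mono fun z hz ↦ ?_)).trans
    ((measure_union_le _ _).trans (add_le_add_right hcheb _))
  refine or_iff_not_imp_right.mpr fun hnear ↦ ?_
  have hz : a * (c * ∑ i, z i) + b * (z ⬝ᵥ z) - n * (b * v) ≤ t' * √n := hz
  have hu : u ⬝ᵥ z = a * (c * ∑ i, z i) - α * ∑ i, z i := by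
    rw [dotProduct, ← Finset.mul_sum]
    ring
  have hnear : |u ⬝ᵥ z| < (t - t') * √n := not_le.mp hnear
  rw [Set.mem_ofPred_eq, Set.mem_Iic, inv_mul_le_iff₀ hsqrt]
  linarith [neg_lt_of_abs_lt hnear]

lemma eventually_isotropicGaussian_linear_add_sq_le {Γ v s : ℝ≥0} (hΓ : 0 < Γ) (d : ℝ) {a b : ℝ}
    (hs : (s : ℝ) = a ^ 2 * Γ * v + 2 * b ^ 2 * v ^ 2) (hs0 : s ≠ 0) {t' t : ℝ} (ht : t' < t)
    {η : ℝ≥0∞} (hη : 0 < η) :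
    ∀ᶠ n : ℕ in atTop, ∀ x : Fin n → ℝ, x ⬝ᵥ x = n * Γ + d * √n →
      isotropicGaussian (Fin n) v {z | a * (x ⬝ᵥ z) + b * (z ⬝ᵥ z) - n * (b * v) ≤ t' * √n}
        ≤ gaussianReal 0 s (Set.Iic t) + η := by
  have := nullSingletonClass_gaussianReal (μ := 0) hs0
  have hΓsq : √(Γ : ℝ) ^ 2 = Γ := Real.sq_sqrt Γ.coe_nonneg
  have hclt := tendsto_isotropicGaussian_linear_add_sq (v := v) (s := s) (a := a * √Γ) (b := b)
    (by rw [hs, mul_pow, hΓsq]) (measurableSet_Iic (a := t)) (by rw [frontier_Iic]; simp)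
  have hgap : Tendsto (fun n : ℕ ↦ ENNReal.ofReal (v * (a ^ 2 * d ^ 2 / Γ) / (t - t') ^ 2 / n))
      atTop (𝓝 0) := by
    simpa using ENNReal.tendsto_ofReal
      (tendsto_const_div_atTop_nhds_zero_nat (v * (a ^ 2 * d ^ 2 / Γ) / (t - t') ^ 2))
  have hlim := hclt.add hgap
  rw [add_zero] at hlim
  filter_upwards [hlim.eventually_lt_const (ENNReal.lt_add_right (measure_ne_top _ _) hη.ne'),
    eventually_gt_atTop 0] with n hlt hn x hx
  have hcoeff : (a * √(x ⬝ᵥ x / n) - a * √Γ) ^ 2 ≤ a ^ 2 * d ^ 2 / Γ / n := by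
    rw [hx]
    exact sq_mul_sqrt_div_sub_mul_sqrt_le hn (NNReal.coe_pos.mpr hΓ)
      (hx ▸ dotProduct_self_nonneg_real x) a
  refine (isotropicGaussian_linear_add_sq_le hn v a b (a * √Γ) ht x).trans (le_trans ?_ hlt.le)
  rw [div_right_comm _ _ (n : ℝ), mul_div_assoc _ _ (n : ℝ)]
  gcongr

end LinearQuadraticTail

section InformationDensity

/-- The information density of the Gaussian channel with noise variance `N` at the input `x` and
noise `z`, relative to the output law `N(0, (N + Γ) Iₙ)`, whose density is `w (N + Γ) n · 0`. -/
noncomputable def gaussianInfoDensity (N Γ : ℝ) (n : ℕ) (x z : Fin n → ℝ) : ℝ :=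
  Real.log (w N n (x + z) x / w (N + Γ) n (x + z) 0)

variable {N Γ : ℝ≥0} {n : ℕ}

lemma log_w (hN : 0 < N) (y x : Fin n → ℝ) :
    Real.log (w N n y x)
      = -(n : ℝ) / 2 * Real.log (2 * π * N) - ((y - x) ⬝ᵥ (y - x)) / (2 * N) := by
  rw [w, Real.log_mul (by positivity) (Real.exp_pos _).ne', Real.log_exp,
    Real.log_rpow (by positivity)]
  simp only [dotProduct, Pi.sub_apply, ← sq]
  ring

lemma gaussianInfoDensity_eq (hN : 0 < N) (x z : Fin n → ℝ) :
    gaussianInfoDensity N Γ n x z = n * ((1 / 2) * Real.log (1 + Γ / N))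
      + (x ⬝ᵥ x / (2 * (Γ + N)) + (Γ + N : ℝ)⁻¹ * (x ⬝ᵥ z)
        + -(Γ / (2 * N * (Γ + N))) * (z ⬝ᵥ z)) := by
  have hNΓ : 0 < N + Γ := by positivity
  have hnorm : Real.log (2 * π * (N + Γ)) = Real.log (2 * π * N) + Real.log (1 + Γ / N) := by
    rw [← Real.log_mul (by positivity) (by positivity)]
    congr 1
    field_simp
  have hsum : (x + z) ⬝ᵥ (x + z) = x ⬝ᵥ x + 2 * (x ⬝ᵥ z) + z ⬝ᵥ z := by
    rw [add_dotProduct, dotProduct_add, dotProduct_add, dotProduct_comm z x]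
    ring
  rw [gaussianInfoDensity, Real.log_div (w_pos hN _ _).ne' (by exact_mod_cast (w_pos hNΓ _ _).ne'),
    ← NNReal.coe_add, log_w hN, log_w hNΓ, NNReal.coe_add, hnorm, add_sub_cancel_left, sub_zero,
    hsum]
  field_simp
  ring

lemma continuous_gaussianInfoDensity (hN : 0 < N) :
    Continuous fun pr : (Fin n → ℝ) × (Fin n → ℝ) ↦ gaussianInfoDensity N Γ n pr.1 pr.2 := by
  simp only [gaussianInfoDensity_eq hN]
  fun_prop

lemma eventually_isotropicGaussian_gaussianInfoDensity_le (hN : 0 < N) (hΓ : 0 < Γ) {V : ℝ≥0}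
    (hV : (V : ℝ) = (Γ ^ 2 + 2 * Γ * N) / (2 * (N + Γ) ^ 2)) {d κ t : ℝ}
    (ht : κ - d / (2 * (Γ + N)) < t) {η : ℝ≥0∞} (hη : 0 < η) :
    ∀ᶠ n : ℕ in atTop, ∀ x : Fin n → ℝ, x ⬝ᵥ x = n * Γ + d * √n →
      isotropicGaussian (Fin n) N {z | gaussianInfoDensity N Γ n x z
          ≤ n * ((1 / 2) * Real.log (1 + Γ / N)) + κ * √n}
        ≤ gaussianReal 0 V (Set.Iic t) + η := by
  have hV0 : V ≠ 0 := by
    rw [← NNReal.coe_ne_zero, hV]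
    positivity
  filter_upwards [eventually_isotropicGaussian_linear_add_sq_le (v := N) (s := V) hΓ d
    (a := (Γ + N : ℝ)⁻¹) (b := -(Γ / (2 * N * (Γ + N)))) (by rw [hV]; field_simp; ring) hV0 ht hη]
    with n htail x hx
  refine (measure_mono fun z hz ↦ ?_).trans (htail x hx)
  simp only [Set.mem_ofPred_eq, gaussianInfoDensity_eq hN, hx] at hz ⊢
  have hcenter : (n * Γ + d * √n) / (2 * (Γ + N))
      = d / (2 * (Γ + N)) * √n - n * (-(Γ / (2 * N * (Γ + N))) * N) := by
    field_simp
    ring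
  linarith

lemma gaussianInfoDensity_le_of_log_div_le (hN : 0 < N) (hn : 0 < n) {x z : Fin n → ℝ}
    {q C r ε : ℝ} (hq : 0 < q) (hqw : q ≤ rexp (ε * √n) * w (N + Γ) n (x + z) 0)
    (hlog : (1 / (n : ℝ)) * Real.log (w N n (x + z) x / q) ≤ C + r / √n) :
    gaussianInfoDensity N Γ n x z ≤ n * C + (r + ε) * √n := by
  have hsqrt : 0 < √(n : ℝ) := by positivity
  have hw := w_pos hN (x + z) x
  have hwΓ : 0 < w (N + Γ) n (x + z) 0 := by
    exact_mod_cast w_pos (N := N + Γ) (by positivity) (x + z) 0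
  have hlogq : Real.log q ≤ ε * √n + Real.log (w (N + Γ) n (x + z) 0) := by
    rw [← Real.log_exp (ε * √n), ← Real.log_mul (Real.exp_pos _).ne' hwΓ.ne']
    exact Real.log_le_log hq hqw
  have hnr : n * (r / √n) = r * √n := by
    field_simp
    rw [Real.sq_sqrt n.cast_nonneg, mul_comm]
  rw [one_div, inv_mul_le_iff₀ (by positivity), Real.log_div hw.ne' hq.ne', mul_add, hnr] at hlog
  rw [gaussianInfoDensity, Real.log_div hw.ne' hwΓ.ne']
  linarith

end InformationDensity

section Mixture

variable {ι α β : Type*} [Fintype ι] [MeasurableSpace α] [MeasurableSpace β]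

/-- The mixture of the measures `σ j` with weights `p j`, the negative weights counting as `0`. -/
noncomputable def mixture (p : ι → ℝ) (σ : ι → Measure α) : Measure α :=
  ∑ j, ENNReal.ofReal (p j) • σ j

variable {p : ι → ℝ} {σ : ι → Measure α}

lemma isProbabilityMeasure_mixture (hp : ∀ j, 0 ≤ p j) (hpsum : ∑ j, p j = 1)
    (hσ : ∀ j, IsProbabilityMeasure (σ j)) : IsProbabilityMeasure (mixture p σ) := by
  constructor
  simp only [mixture, Measure.coe_finsetSum, Finset.sum_apply, Measure.smul_apply, measure_univ,
    smul_eq_mul, mul_one]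
  rw [← ENNReal.ofReal_sum_of_nonneg fun j _ ↦ hp j, hpsum, ENNReal.ofReal_one]

lemma integral_mixture (hp : ∀ j, 0 ≤ p j) {f : α → ℝ} (hf : ∀ j, Integrable f (σ j)) :
    ∫ x, f x ∂mixture p σ = ∑ j, p j * ∫ x, f x ∂σ j := by
  rw [mixture, integral_finsetSum_measure fun j _ ↦ (hf j).smul_measure ENNReal.ofReal_ne_top]
  simp only [integral_smul_measure, ENNReal.toReal_ofReal (hp _), smul_eq_mul]

lemma integral_mixture_le (hp : ∀ j, 0 ≤ p j) (hpsum : ∑ j, p j = 1) {f : α → ℝ}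
    (hf : ∀ j, Integrable f (σ j)) {c : ℝ} (hc : ∀ j, ∫ x, f x ∂σ j ≤ c) :
    ∫ x, f x ∂mixture p σ ≤ c :=
  calc ∫ x, f x ∂mixture p σ = ∑ j, p j * ∫ x, f x ∂σ j := integral_mixture hp hf
    _ ≤ ∑ j, p j * c :=
        Finset.sum_le_sum fun j _ ↦ mul_le_mul_of_nonneg_left (hc j) (hp j)
    _ = c := by rw [← Finset.sum_mul, hpsum, one_mul]

lemma mixture_prod_le [∀ j, IsProbabilityMeasure (σ j)] {γ : Measure β} [SFinite γ]
    {E : Set (α × β)} (hE : MeasurableSet E) {B : ι → ℝ≥0∞}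
    (hB : ∀ j, ∀ᵐ x ∂σ j, γ (Prod.mk x ⁻¹' E) ≤ B j) :
    (mixture p σ).prod γ E ≤ ∑ j, ENNReal.ofReal (p j) * B j := by
  rw [Measure.prod_apply hE, mixture, lintegral_finsetSum_measure]
  refine Finset.sum_le_sum fun j _ ↦ ?_
  rw [lintegral_smul_measure, smul_eq_mul]
  gcongr
  calc ∫⁻ x, γ (Prod.mk x ⁻¹' E) ∂σ j ≤ ∫⁻ _, B j ∂σ j := lintegral_mono_ae (hB j)
    _ = B j := by rw [lintegral_const, measure_univ, mul_one]

end Mixture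

section SphereMixture

variable {ι : Type*} [Fintype ι] {N Γ : ℝ≥0} {p : ι → ℝ} {d : ι → ℝ}
  {σ : ∀ n : ℕ, ι → Measure (Fin n → ℝ)}

lemma eventually_integral_w_mixture_le (hN : 0 < N) (hΓ : 0 < Γ) (hp : ∀ j, 0 ≤ p j)
    (hpsum : ∑ j, p j = 1)
    (hσ : ∀ j, ∀ᶠ n : ℕ in atTop, IsSphereUniform (σ n j) (n * Γ + d j * √n))
    {ε : ℝ} (hε : 0 < ε) :
    ∀ᶠ n : ℕ in atTop, ∀ y,
      ∫ x, w N n y x ∂mixture p (σ n) ≤ rexp (ε * √n) * w (N + Γ) n y 0 := by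
  filter_upwards [eventually_all.mpr hσ,
    eventually_all.mpr fun j ↦ eventually_forall_integral_w_le hN hΓ (d j) hε] with n hσn hle y
  have := fun j ↦ (hσn j).isProbabilityMeasure
  exact integral_mixture_le hp hpsum (fun j ↦ integrable_w hN y _) fun j ↦ hle j _ (hσn j) y

lemma eventually_mixture_prod_le (hN : 0 < N) (hΓ : 0 < Γ) (hp : ∀ j, 0 ≤ p j)
    (hpsum : ∑ j, p j = 1)
    (hσ : ∀ j, ∀ᶠ n : ℕ in atTop, IsSphereUniform (σ n j) (n * Γ + d j * √n)) {V : ℝ≥0}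
    (hV : (V : ℝ) = (Γ ^ 2 + 2 * Γ * N) / (2 * (N + Γ) ^ 2)) {r κ : ℝ} (hκ : r < κ) {t : ι → ℝ}
    (ht : ∀ j, κ - d j / (2 * (Γ + N)) < t j) {η : ℝ≥0∞} (hη : 0 < η) :
    ∀ᶠ n : ℕ in atTop,
      (mixture p (σ n)).prod (isotropicGaussian (Fin n) N)
          {pr | (1 / (n : ℝ)) * Real.log (w N n (pr.1 + pr.2) pr.1 /
              ∫ x, w N n (pr.1 + pr.2) x ∂mixture p (σ n))
            ≤ (1 / 2) * Real.log (1 + Γ / N) + r / √n}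
        ≤ ∑ j, ENNReal.ofReal (p j) * (gaussianReal 0 V (Set.Iic (t j)) + η) := by
  filter_upwards [eventually_all.mpr hσ, eventually_gt_atTop 0,
    eventually_integral_w_mixture_le hN hΓ hp hpsum hσ (sub_pos.mpr hκ),
    eventually_all.mpr fun j ↦
      eventually_isotropicGaussian_gaussianInfoDensity_le hN hΓ hV (ht j) hη]
    with n hσn hn hq htail
  have hprob := fun j ↦ (hσn j).isProbabilityMeasure
  have := isProbabilityMeasure_mixture hp hpsum hprob
  let E : Set ((Fin n → ℝ) × (Fin n → ℝ)) := {pr | gaussianInfoDensity N Γ n pr.1 pr.2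
    ≤ n * ((1 / 2) * Real.log (1 + Γ / N)) + κ * √n}
  have hE : MeasurableSet E :=
    measurableSet_le (continuous_gaussianInfoDensity hN).measurable measurable_const
  refine (measure_mono (t := E) fun pr hpr ↦ ?_).trans (mixture_prod_le hE fun j ↦ ?_)
  · have hle := gaussianInfoDensity_le_of_log_div_le hN hn (integral_w_pos hN _ _) (hq _) hpr
    rwa [add_sub_cancel] at hle
  · filter_upwards [(hσn j).ae_dotProduct_self] with x hx using htail j x hx

end SphereMixture

section NormalCDF

lemma gaussianReal_Iic_sqrt_mul {V : ℝ≥0} (hV : 0 < V) (t : ℝ) :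
    gaussianReal 0 V (Set.Iic (√V * t)) = gaussianReal 0 1 (Set.Iic t) := by
  have hmap : (gaussianReal 0 1).map (√(V : ℝ) * ·) = gaussianReal 0 V := by
    rw [gaussianReal_map_const_mul, mul_zero]
    congr
    ext
    simp
  rw [← hmap, Measure.map_apply (by fun_prop) measurableSet_Iic]
  congr 1
  ext x
  exact mul_le_mul_iff_right₀ (Real.sqrt_pos.mpr (NNReal.coe_pos.mpr hV))

lemma tendsto_Phi_add_nhdsGT_zero (x : ℝ) :
    Tendsto (fun τ ↦ Phi (x + τ)) (𝓝[>] 0) (𝓝 (Phi x)) := by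
  have hcdf : Phi = cdf (gaussianReal 0 1) := by
    ext y
    rw [cdf_eq_real]
    rfl
  have hadd : Tendsto (x + ·) (𝓝[>] 0) (𝓝[≥] x) := by
    refine tendsto_nhdsWithin_iff.mpr ⟨?_, ?_⟩
    · exact (Continuous.tendsto' (by fun_prop) 0 x (add_zero x)).mono_left nhdsWithin_le_nhds
    · filter_upwards [self_mem_nhdsWithin] with τ (hτ : 0 < τ)
      exact (le_add_iff_nonneg_right x).mpr hτ.le
  rw [hcdf]
  exact Tendsto.comp ((cdf (gaussianReal 0 1)).right_continuous x) hadd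

end NormalCDF

section Conclusion

variable {ι : Type*} [Fintype ι] {N Γ : ℝ≥0} {VΓ Cp : ℝ} {p πv : ι → ℝ}
  {σ : ∀ n : ℕ, ℝ → Measure (Fin n → ℝ)}

/-- The mixture `Pₙ` of the uniform laws on the spheres of squared radii `nΓⱼ⁽ⁿ⁾`, as in `Pmix`, for
an arbitrary finite number of spheres. -/
noncomputable def gammaSphereMixture (σ : ∀ n : ℕ, ℝ → Measure (Fin n → ℝ)) (Γ VΓ Cp r : ℝ)
    (p πv : ι → ℝ) (n : ℕ) : Measure (Fin n → ℝ) :=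
  mixture p fun j ↦ σ n √(n * GammaJ Γ VΓ Cp r (πv j) n)

lemma natCast_mul_GammaJ (Γ VΓ : ℝ) (hCp : Cp ≠ 0) (r πj : ℝ) {n : ℕ} (hn : n ≠ 0) :
    n * GammaJ Γ VΓ Cp r πj n = n * Γ + (r - √VΓ * πj) / Cp * √n := by
  have hsqrt : (√n : ℝ) ≠ 0 := by positivity
  rw [GammaJ]
  field_simp
  linear_combination (√VΓ * πj - r) * Real.sq_sqrt (Nat.cast_nonneg (α := ℝ) n)

lemma UniformSphereFamily.eventually_isSphereUniform_GammaJ (hσ : UniformSphereFamily σ)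
    {Γ : ℝ} (hΓ : 0 < Γ) (VΓ : ℝ) (hCp : Cp ≠ 0) (r πj : ℝ) :
    ∀ᶠ n : ℕ in atTop, IsSphereUniform (σ n √(n * GammaJ Γ VΓ Cp r πj n))
      (n * Γ + (r - √VΓ * πj) / Cp * √n) := by
  filter_upwards [eventually_natCast_mul_add_mul_sqrt_pos hΓ ((r - √VΓ * πj) / Cp),
    eventually_gt_atTop 0] with n hρ hn
  rw [natCast_mul_GammaJ Γ VΓ hCp r πj hn.ne']
  exact hσ.isSphereUniform hn hρ

lemma eventually_toReal_gammaSphereMixture_prod_le (hN : 0 < N) (hΓ : 0 < Γ)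
    (hCp : Cp = 1 / (2 * (Γ + N))) (hVΓ : VΓ = (Γ ^ 2 + 2 * Γ * N) / (2 * (N + Γ) ^ 2))
    (hσ : UniformSphereFamily σ) (hp : ∀ j, 0 ≤ p j) (hpsum : ∑ j, p j = 1) (r : ℝ)
    {τ : ℝ} (hτ : 0 < τ) :
    ∀ᶠ n : ℕ in atTop,
      ((gammaSphereMixture σ Γ VΓ Cp r p πv n).prod (isotropicGaussian (Fin n) N)
          {pr | (1 / (n : ℝ)) * Real.log (w N n (pr.1 + pr.2) pr.1 /
              ∫ x, w N n (pr.1 + pr.2) x ∂gammaSphereMixture σ Γ VΓ Cp r p πv n)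
            ≤ (1 / 2) * Real.log (1 + Γ / N) + r / √n}).toReal
        ≤ ∑ j, p j * (Phi (πv j + τ) + τ) := by
  have hΓ' : (0 : ℝ) < Γ := hΓ
  have hVΓ0 : 0 < VΓ := by rw [hVΓ]; positivity
  have hCp0 : Cp ≠ 0 := by rw [hCp]; positivity
  lift VΓ to ℝ≥0 using hVΓ0.le
  have hsτ : 0 < √(VΓ : ℝ) * τ := mul_pos (Real.sqrt_pos.mpr hVΓ0) hτ
  filter_upwards [eventually_mixture_prod_le (r := r) (κ := r + √VΓ * τ / 2)
    (t := fun j ↦ √VΓ * (πv j + τ)) (η := ENNReal.ofReal τ) hN hΓ hp hpsum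
    (fun j ↦ hσ.eventually_isSphereUniform_GammaJ hΓ' VΓ hCp0 r (πv j)) hVΓ (by linarith)
    (fun j ↦ by rw [hCp]; field_simp; linarith) (by simpa using hτ)] with n hn
  have hterm (j : ι) : 0 ≤ p j * (Phi (πv j + τ) + τ) :=
    mul_nonneg (hp j) (add_nonneg ENNReal.toReal_nonneg hτ.le)
  refine ENNReal.toReal_le_of_le_ofReal (Finset.sum_nonneg fun j _ ↦ hterm j) (hn.trans_eq ?_)
  simp only [gaussianReal_Iic_sqrt_mul (NNReal.coe_pos.mp hVΓ0)]
  rw [ENNReal.ofReal_sum_of_nonneg fun j _ ↦ hterm j]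
  refine Finset.sum_congr rfl fun j _ ↦ ?_
  rw [ENNReal.ofReal_mul (hp j), Phi, ENNReal.ofReal_add ENNReal.toReal_nonneg hτ.le,
    ENNReal.ofReal_toReal (measure_ne_top _ _)]

end Conclusion

theorem achievability_limsup_general {ι : Type*} [Fintype ι] (N Γ r : ℝ) (hN : 0 < N)
    (hΓ : 0 < Γ) (CΓ Cp VΓ : ℝ) (hCΓ : CΓ = (1 / 2) * Real.log (1 + Γ / N))
    (hCp : Cp = 1 / (2 * (Γ + N))) (hVΓ : VΓ = (Γ ^ 2 + 2 * Γ * N) / (2 * (N + Γ) ^ 2))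
    (σ : ∀ n : ℕ, ℝ → Measure (Fin n → ℝ)) (hσ : UniformSphereFamily σ)
    (p πv : ι → ℝ) (hp : ∀ j, 0 ≤ p j) (hpsum : ∑ j, p j = 1) :
    limsup (fun n : ℕ ↦
        ((gammaSphereMixture σ Γ VΓ Cp r p πv n).prod (isotropicGaussian (Fin n) N.toNNReal)
          {pr | (1 / (n : ℝ)) * Real.log (w N n (pr.1 + pr.2) pr.1 /
              ∫ x, w N n (pr.1 + pr.2) x ∂gammaSphereMixture σ Γ VΓ Cp r p πv n)
            ≤ CΓ + r / √n}).toReal) atTop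
      ≤ ∑ j, p j * Phi (πv j) := by
  lift N to ℝ≥0 using hN.le
  lift Γ to ℝ≥0 using hΓ.le
  have hlim : Tendsto (fun τ ↦ ∑ j, p j * (Phi (πv j + τ) + τ)) (𝓝[>] 0)
      (𝓝 (∑ j, p j * (Phi (πv j) + 0))) :=
    tendsto_finsetSum _ fun j _ ↦ ((tendsto_Phi_add_nhdsGT_zero (πv j)).add
      (tendsto_id.mono_left nhdsWithin_le_nhds)).const_mul _
  simp only [add_zero] at hlim
  refine ge_of_tendsto hlim ?_
  filter_upwards [self_mem_nhdsWithin] with τ hτ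
  refine limsup_le_of_le (isCoboundedUnder_le_of_le _ (x := 0) fun n ↦ ENNReal.toReal_nonneg) ?_
  simp only [hCΓ, Real.toNNReal_coe]
  exact eventually_toReal_gammaSphereMixture_prod_le hN hΓ hCp hVΓ hσ hp hpsum r hτ

/-- achievability, main estimate: for the three-sphere mixture input,
`limsup_n Pr((1/n)·log(w(Y|X)/qₙ(Y)) ≤ C(Γ) + r/√n) ≤ Σⱼ pⱼ Φ(πⱼ)`. -/
theorem achievability_limsup (N Γ V r : ℝ) (hN : 0 < N) (hΓ : 0 < Γ) (hV : 0 ≤ V)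
    (CΓ Cp VΓ : ℝ) (hCΓ : CΓ = (1/2) * Real.log (1 + Γ/N))
    (hCp : Cp = 1 / (2 * (Γ + N)))
    (hVΓ : VΓ = (Γ^2 + 2*Γ*N) / (2 * (N + Γ)^2))
    (σ : ∀ n : ℕ, ℝ → Measure (Fin n → ℝ)) (hσ : UniformSphereFamily σ)
    (p πv : Fin 3 → ℝ) (hp : ∀ j, 0 ≤ p j) (hpsum : ∑ j, p j = 1)
    (hmean : ∑ j, p j * πv j = r / Real.sqrt VΓ)
    (hvar : ∑ j, p j * (πv j)^2 - (r / Real.sqrt VΓ)^2 ≤ Cp^2 * V / VΓ) :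
    Filter.limsup (fun n : ℕ =>
        (((Pmix σ Γ VΓ Cp r p πv n).prod
            (Measure.pi fun _ : Fin n => gaussianReal 0 N.toNNReal))
          {pr : (Fin n → ℝ) × (Fin n → ℝ) |
            (1/(n : ℝ)) * Real.log (w N n (pr.1 + pr.2) pr.1 /
                ∫ x, w N n (pr.1 + pr.2) x ∂(Pmix σ Γ VΓ Cp r p πv n))
              ≤ CΓ + r / Real.sqrt n}).toReal)
      Filter.atTop
    ≤ ∑ j, p j * Phi (πv j) :=
  achievability_limsup_general N Γ r hN hΓ CΓ Cp VΓ hCΓ hCp hVΓ σ hσ p πv hp hpsum
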